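/- Every sequence (f_n) in L⁰(λ) that λ-converges to 0 admits a subsequence (f_{n_k}) such that the set K = {Σ_{k=1}^{K} α_k 2^k |f_{n_k}| : α_1,…,α_K ≥ 0, Σ_{k=1}^{K} α_k ≤ 1, K∈ℕ} is bounded in L⁰(λ). -/

import Mathlib

open Set Filter Topology

namespace FA

/-- An algebra of subsets of `Ω`. -/
structure SetAlg (Ω : Type*) where
  sets : Set (Set Ω)
  empty_mem : ∅ ∈ sets
  compl_mem : ∀ ⦃A⦄, A ∈ sets → Aᶜ ∈ sets
  union_mem : ∀ ⦃A B⦄, A ∈ sets → B ∈ sets → A ∪ B ∈ sets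

/-- A bounded, finitely additive real-valued set function on the algebra `𝒜`,
i.e. an element of `ba(𝒜)`. -/
structure BAMeasure {Ω : Type*} (𝒜 : SetAlg Ω) where
  toFun : Set Ω → ℝ
  map_empty : toFun ∅ = 0
  additive : ∀ ⦃A B : Set Ω⦄, A ∈ 𝒜.sets → B ∈ 𝒜.sets → Disjoint A B →
      toFun (A ∪ B) = toFun A + toFun B
  bounded : ∃ M : ℝ, ∀ A ∈ 𝒜.sets, |toFun A| ≤ M

variable {Ω : Type*} {𝒜 : SetAlg Ω}

/-- Total variation `|λ|(A) = λ⁺(A) + λ⁻(A)`. -/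
noncomputable def var (lam : BAMeasure 𝒜) (A : Set Ω) : ℝ :=
  sSup {x | ∃ B ∈ 𝒜.sets, B ⊆ A ∧ x = lam.toFun B} +
  sSup {x | ∃ B ∈ 𝒜.sets, B ⊆ A ∧ x = -lam.toFun B}

/-- The outer measure `|λ|*(B) = inf {|λ|(A) : A ∈ 𝒜, B ⊆ A}`. -/
noncomputable def outer (lam : BAMeasure 𝒜) (B : Set Ω) : ℝ :=
  sInf {x | ∃ A ∈ 𝒜.sets, B ⊆ A ∧ x = var lam A}

/-- `𝒜`-simple functions. -/
def IsSimple (𝒜 : SetAlg Ω) (f : Ω → ℝ) : Prop :=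
  (Set.range f).Finite ∧ ∀ r : ℝ, f ⁻¹' {r} ∈ 𝒜.sets

/-- `λ`-convergence: `(f n)` converges to `g` in `λ`-measure. -/
def LConv (lam : BAMeasure 𝒜) (f : ℕ → Ω → ℝ) (g : Ω → ℝ) : Prop :=
  ∀ c > (0:ℝ), Tendsto (fun n => outer lam {ω | c < |f n ω - g ω|}) atTop (𝓝 0)

/-- `λ`-Cauchy sequences. -/
def LCauchy (lam : BAMeasure 𝒜) (f : ℕ → Ω → ℝ) : Prop :=
  ∀ c > (0:ℝ), ∀ ε > (0:ℝ), ∃ N : ℕ, ∀ p q : ℕ,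
    outer lam {ω | c < |f (N + p) ω - f (N + q) ω|} < ε

/-- `L⁰(λ)`: `λ`-limits of sequences of `𝒜`-simple functions. -/
def L0 (lam : BAMeasure 𝒜) : Set (Ω → ℝ) :=
  {f | ∃ s : ℕ → Ω → ℝ, (∀ n, IsSimple 𝒜 (s n)) ∧ LConv lam s f}

/-- The metric of `L⁰(λ)`: `d(f,g) = inf {c + |λ|*(|f-g| ≥ c) : c > 0}`. -/
noncomputable def dL0 (lam : BAMeasure 𝒜) (f g : Ω → ℝ) : ℝ :=
  sInf {x | ∃ c > (0:ℝ), x = c + outer lam {ω | c ≤ |f ω - g ω|}}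

/-- A set `K` is bounded in `L⁰(λ)` if `lim_{c→∞} sup_{f∈K} |λ|*(|f|>c) = 0`. -/
def BddL0 (lam : BAMeasure 𝒜) (K : Set (Ω → ℝ)) : Prop :=
  ∀ ε > (0:ℝ), ∃ c₀ : ℝ, ∀ c ≥ c₀, ∀ f ∈ K, outer lam {ω | c < |f ω|} < ε

/-- The nonnegative elements of `L⁰(λ)`. -/
def L0pos (lam : BAMeasure 𝒜) : Set (Ω → ℝ) := {f ∈ L0 lam | ∀ ω, 0 ≤ f ω}

/-- The elementary integral of a simple function with respect to a set function. -/
noncomputable def simpleIntegral (m : Set Ω → ℝ) (f : Ω → ℝ) : ℝ :=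
  ∑ᶠ r : ℝ, r * m (f ⁻¹' {r})

/-- Dunford–Schwartz integrability: there is a sequence of simple functions converging to `f`
in `λ`-measure which is Cauchy in mean. -/
def MemL1 (lam : BAMeasure 𝒜) (f : Ω → ℝ) : Prop :=
  ∃ s : ℕ → Ω → ℝ, (∀ n, IsSimple 𝒜 (s n)) ∧ LConv lam s f ∧
    ∀ ε > (0:ℝ), ∃ N : ℕ, ∀ m ≥ N, ∀ n ≥ N,
      simpleIntegral (var lam) (fun ω => |s m ω - s n ω|) < ε

/-- `L¹(λ)`. -/
def L1 (lam : BAMeasure 𝒜) : Set (Ω → ℝ) := {f | MemL1 lam f}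

open scoped Classical in
/-- The Dunford–Schwartz integral `∫ f dλ`. -/
noncomputable def integral (lam : BAMeasure 𝒜) (f : Ω → ℝ) : ℝ :=
  if h : MemL1 lam f then
    limUnder atTop (fun n => simpleIntegral lam.toFun (h.choose n))
  else 0

open scoped Classical in
/-- The `L¹(λ)` seminorm `∫ |f| d|λ|`. -/
noncomputable def l1Norm (lam : BAMeasure 𝒜) (f : Ω → ℝ) : ℝ :=
  if h : MemL1 lam f then
    limUnder atTop (fun n => simpleIntegral (var lam) (fun ω => |h.choose n ω|))
  else 0

/-- A set is bounded in `L¹(μ)` if the integrals `∫|f| d|μ|` are uniformly bounded. -/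
def BddL1 (mu : BAMeasure 𝒜) (K : Set (Ω → ℝ)) : Prop :=
  ∃ M : ℝ, ∀ f ∈ K, l1Norm mu f ≤ M

/-- Finitely additive probability measures. -/
def IsFAProb (mu : BAMeasure 𝒜) : Prop :=
  mu.toFun Set.univ = 1 ∧ ∀ A ∈ 𝒜.sets, 0 ≤ mu.toFun A

/-- `μ ∈ 𝔓_*(λ)`: a finitely additive probability with `|μ| ≤ c |λ|` and the same null
sets as `λ`. -/
def PStar (lam mu : BAMeasure 𝒜) : Prop :=
  IsFAProb mu ∧ (∃ c : ℝ, 0 ≤ c ∧ ∀ A ∈ 𝒜.sets, var mu A ≤ c * var lam A) ∧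
  ∀ A ∈ 𝒜.sets, (mu.toFun A = 0 ↔ var lam A = 0)

/-- `μ ∈ 𝔓_*(λ; K)`. -/
def PStarWith (lam : BAMeasure 𝒜) (K : Set (Ω → ℝ)) (mu : BAMeasure 𝒜) : Prop :=
  PStar lam mu ∧ K ⊆ L1 mu ∧ BddL1 mu K

/-- `f` is a `λ`-a.s. lower bound of `K`. -/
def ASLowerBound (lam : BAMeasure 𝒜) (f : Ω → ℝ) (K : Set (Ω → ℝ)) : Prop :=
  ∀ c > (0:ℝ), ∀ k ∈ K, outer lam {ω | k ω < f ω - c} = 0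

/-- Absolute continuity `μ ≪ λ` for bounded finitely additive set functions. -/
def AbsCont (mu lam : BAMeasure 𝒜) : Prop :=
  ∀ ε > (0:ℝ), ∃ δ > (0:ℝ), ∀ A ∈ 𝒜.sets, var lam A < δ → var mu A < ε

/-- `λ ∈ ba₀(𝒜)`: the range of `λ` is finite. -/
def FiniteRange (lam : BAMeasure 𝒜) : Prop := (lam.toFun '' 𝒜.sets).Finite

/-- `μ ∈ ba₀(λ)`. -/
def BA0rel (lam mu : BAMeasure 𝒜) : Prop := FiniteRange mu ∧ AbsCont mu lam

/-- Strong continuity: arbitrarily fine finite partitions. -/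
def StronglyContinuous (lam : BAMeasure 𝒜) : Prop :=
  ∀ ε > (0:ℝ), ∃ (N : ℕ) (A : Fin N → Set Ω), (∀ n, A n ∈ 𝒜.sets) ∧
    Pairwise (Function.onFun Disjoint A) ∧ (⋃ n, A n) = Set.univ ∧
    ∀ n, var lam (A n) < ε

/-- Orthogonality of bounded finitely additive set functions. -/
def Orthogonal (mu nu : BAMeasure 𝒜) : Prop :=
  ∀ ε > (0:ℝ), ∃ A ∈ 𝒜.sets, var mu A < ε ∧ var nu Aᶜ < ε

/-- Strong discontinuity: orthogonal to every strongly continuous element of `ba(𝒜)`. -/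
def StronglyDiscontinuous (mu : BAMeasure 𝒜) : Prop :=
  ∀ nu : BAMeasure 𝒜, StronglyContinuous nu → Orthogonal mu nu

/-- Countable additivity of `λ` on the algebra `𝒜`. -/
def CountablyAdditive (lam : BAMeasure 𝒜) : Prop :=
  ∀ A : ℕ → Set Ω, (∀ n, A n ∈ 𝒜.sets) → Pairwise (Function.onFun Disjoint A) →
    (⋃ n, A n) ∈ 𝒜.sets → HasSum (fun n => lam.toFun (A n)) (lam.toFun (⋃ n, A n))

/-- `𝒜` is a σ-algebra. -/
def IsSigmaAlg (𝒜 : SetAlg Ω) : Prop :=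
  ∀ A : ℕ → Set Ω, (∀ n, A n ∈ 𝒜.sets) → (⋃ n, A n) ∈ 𝒜.sets

/-- Linearity of a functional on `L⁰(λ)`. -/
def LinearOnL0 (lam : BAMeasure 𝒜) (φ : (Ω → ℝ) → ℝ) : Prop :=
  (∀ f ∈ L0 lam, ∀ g ∈ L0 lam, φ (f + g) = φ f + φ g) ∧
  (∀ a : ℝ, ∀ f ∈ L0 lam, φ (a • f) = a * φ f)

/-- Continuity of a functional on `L⁰(λ)` with respect to the metric `d`. -/
def ContinuousOnL0 (lam : BAMeasure 𝒜) (φ : (Ω → ℝ) → ℝ) : Prop :=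
  ∀ f ∈ L0 lam, ∀ ε > (0:ℝ), ∃ δ > (0:ℝ), ∀ g ∈ L0 lam, dL0 lam g f < δ → |φ g - φ f| < ε

/-!
The tail `c ↦ |λ|*(|g| > c)` of every `g ∈ L⁰(λ)` vanishes at infinity. Passing to a subsequence,
the functions `g_k = 2 ^ k f_{n_k}` satisfy `∑ |λ|*(|g_k| > 1) < ∞`. A subconvex combination of the
`|g_k|` exceeds `c` only where some `g_k` does, so its tail at `c` is at most
`∑ |λ|*(|g_k| > c)`, which tends to `0` as `c → ∞` by dominated convergence for series.
-/

theorem exists_strictMono_summable_diagonal {E : Type*} [NormedAddCommGroup E] [CompleteSpace E]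
    {u : ℕ → ℕ → E} (hu : ∀ k, Tendsto (u k) atTop (𝓝 0)) :
    ∃ n : ℕ → ℕ, StrictMono n ∧ Summable fun k => u k (n k) := by
  have hsmall (k : ℕ) : ∀ᶠ m in atTop, ‖u k m‖ < (1 / 2 : ℝ) ^ k :=
    (tendsto_zero_iff_norm_tendsto_zero.1 (hu k)).eventually_lt_const (by positivity)
  obtain ⟨n, hn, hlt⟩ := extraction_forall_of_eventually hsmall
  exact ⟨n, hn, .of_norm_bounded summable_geometric_two fun k => (hlt k).le⟩

theorem nnnorm_sum_smul_le_sup {ι 𝕜 E : Type*} [SeminormedRing 𝕜] [SeminormedAddCommGroup E]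
    [Module 𝕜 E] [IsBoundedSMul 𝕜 E] {s : Finset ι} {α : ι → 𝕜} (hα : ∑ i ∈ s, ‖α i‖₊ ≤ 1)
    (x : ι → E) : ‖∑ i ∈ s, α i • x i‖₊ ≤ s.sup fun i => ‖x i‖₊ := by
  set b := s.sup fun i => ‖x i‖₊
  calc ‖∑ i ∈ s, α i • x i‖₊ ≤ ∑ i ∈ s, ‖α i‖₊ * b :=
        (nnnorm_sum_le _ _).trans <| Finset.sum_le_sum fun i hi =>
          (nnnorm_smul_le _ _).trans <| by gcongr; exact Finset.le_sup (f := fun i => ‖x i‖₊) hi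
    _ = (∑ i ∈ s, ‖α i‖₊) * b := (Finset.sum_mul ..).symm
    _ ≤ b := mul_le_of_le_one_left' hα

theorem SetAlg.isSetAlgebra (𝒜 : SetAlg Ω) : MeasureTheory.IsSetAlgebra 𝒜.sets :=
  ⟨𝒜.empty_mem, 𝒜.compl_mem, 𝒜.union_mem⟩

instance : Neg (BAMeasure 𝒜) where
  neg lam :=
    { toFun := fun A => -lam.toFun A
      map_empty := by rw [lam.map_empty, neg_zero]
      additive := fun A B hA hB hAB => by rw [lam.additive hA hB hAB, neg_add]
      bounded := by simpa only [abs_neg] using lam.bounded }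

/-- The positive part `λ⁺` of `λ`. The negative part is `posVar (-lam)`. -/
noncomputable def posVar (lam : BAMeasure 𝒜) (A : Set Ω) : ℝ :=
  sSup {x | ∃ B ∈ 𝒜.sets, B ⊆ A ∧ x = lam.toFun B}

/-- The outer distribution function `c ↦ |λ|*(|f| > c)`, through which convergence and
boundedness in `L⁰(λ)` are expressed. -/
noncomputable def tail (lam : BAMeasure 𝒜) (f : Ω → ℝ) (c : ℝ) : ℝ :=
  outer lam {ω | c < |f ω|}

section

variable (lam : BAMeasure 𝒜) {A B C : Set Ω} {f : Ω → ℝ} {a c : ℝ}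

theorem le_posVar (hB : B ∈ 𝒜.sets) (hBA : B ⊆ A) : lam.toFun B ≤ posVar lam A := by
  obtain ⟨M, hM⟩ := lam.bounded
  refine le_csSup ⟨M, ?_⟩ ⟨B, hB, hBA, rfl⟩
  rintro _ ⟨C, hC, -, rfl⟩
  exact (le_abs_self _).trans (hM C hC)

theorem posVar_le (h : ∀ B ∈ 𝒜.sets, B ⊆ A → lam.toFun B ≤ c) : posVar lam A ≤ c := by
  refine csSup_le ⟨_, ∅, 𝒜.empty_mem, empty_subset A, rfl⟩ ?_
  rintro _ ⟨B, hB, hBA, rfl⟩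
  exact h B hB hBA

theorem posVar_nonneg (A : Set Ω) : 0 ≤ posVar lam A :=
  lam.map_empty.ge.trans (le_posVar lam 𝒜.empty_mem (empty_subset A))

theorem posVar_empty : posVar lam ∅ = 0 :=
  (posVar_le lam fun B _ hB => by rw [subset_empty_iff.1 hB, lam.map_empty]).antisymm
    (posVar_nonneg lam ∅)

theorem posVar_union_le (hA : A ∈ 𝒜.sets) (B : Set Ω) :
    posVar lam (A ∪ B) ≤ posVar lam A + posVar lam B := by
  refine posVar_le lam fun C hC hCAB => ?_
  have hCA : C ∩ A ∈ 𝒜.sets := 𝒜.isSetAlgebra.inter_mem hC hA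
  have hC_sdiff : C \ A ∈ 𝒜.sets := 𝒜.isSetAlgebra.sdiff_mem hC hA
  calc lam.toFun C = lam.toFun (C ∩ A) + lam.toFun (C \ A) := by
        rw [← lam.additive hCA hC_sdiff disjoint_sdiff_inter.symm, inter_union_sdiff]
    _ ≤ posVar lam A + posVar lam B :=
        add_le_add (le_posVar lam hCA inter_subset_right)
          (le_posVar lam hC_sdiff (sdiff_subset_iff.2 hCAB))

theorem var_eq_posVar_add_posVar_neg (A : Set Ω) :
    var lam A = posVar lam A + posVar (-lam) A := rfl

theorem var_nonneg (A : Set Ω) : 0 ≤ var lam A :=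
  add_nonneg (posVar_nonneg lam A) (posVar_nonneg (-lam) A)

theorem var_empty : var lam ∅ = 0 := by
  rw [var_eq_posVar_add_posVar_neg, posVar_empty, posVar_empty, add_zero]

theorem var_union_le (hA : A ∈ 𝒜.sets) (B : Set Ω) :
    var lam (A ∪ B) ≤ var lam A + var lam B := by
  simp only [var_eq_posVar_add_posVar_neg]
  linarith [posVar_union_le lam hA B, posVar_union_le (-lam) hA B]

theorem outer_le_var (hA : A ∈ 𝒜.sets) (hBA : B ⊆ A) : outer lam B ≤ var lam A := by
  refine csInf_le ⟨0, ?_⟩ ⟨A, hA, hBA, rfl⟩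
  rintro _ ⟨C, -, -, rfl⟩
  exact var_nonneg lam C

theorem le_outer (h : ∀ A ∈ 𝒜.sets, B ⊆ A → c ≤ var lam A) : c ≤ outer lam B := by
  refine le_csInf ⟨_, univ, 𝒜.isSetAlgebra.univ_mem, subset_univ B, rfl⟩ ?_
  rintro _ ⟨A, hA, hBA, rfl⟩
  exact h A hA hBA

theorem outer_nonneg (B : Set Ω) : 0 ≤ outer lam B :=
  le_outer lam fun A _ _ => var_nonneg lam A

theorem outer_empty : outer lam ∅ = 0 :=
  ((outer_le_var lam 𝒜.empty_mem subset_rfl).trans_eq (var_empty lam)).antisymm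
    (outer_nonneg lam ∅)

theorem outer_mono (h : B ⊆ C) : outer lam B ≤ outer lam C :=
  le_outer lam fun _ hA hCA => outer_le_var lam hA (h.trans hCA)

theorem outer_union_le (B C : Set Ω) : outer lam (B ∪ C) ≤ outer lam B + outer lam C := by
  rw [← sub_le_iff_le_add]
  refine le_outer lam fun A hA hBA => ?_
  rw [sub_le_comm]
  refine le_outer lam fun D hD hCD => ?_
  rw [sub_le_iff_le_add']
  exact (outer_le_var lam (𝒜.union_mem hA hD) (union_subset_union hBA hCD)).trans
    (var_union_le lam hA D)

theorem outer_biUnion_finset_le {ι : Type*} (s : Finset ι) (B : ι → Set Ω) :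
    outer lam (⋃ i ∈ s, B i) ≤ ∑ i ∈ s, outer lam (B i) :=
  s.apply_union_le_sum (outer_empty lam) (outer_union_le lam _ _)

theorem tail_nonneg (f : Ω → ℝ) (c : ℝ) : 0 ≤ tail lam f c :=
  outer_nonneg lam _

theorem tail_antitone (f : Ω → ℝ) : Antitone (tail lam f) :=
  fun _ _ hcd => outer_mono lam fun _ hω => hcd.trans_lt hω

theorem tail_smul (ha : a ≠ 0) (f : Ω → ℝ) (c : ℝ) :
    tail lam (a • f) c = tail lam f (c / |a|) := by
  simp only [tail, Pi.smul_apply, smul_eq_mul, abs_mul, div_lt_iff₀' (abs_pos.2 ha)]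

theorem tail_le_sum_tail {ι : Type*} {s : Finset ι} {g : ι → Ω → ℝ}
    (hfg : ∀ ω, ‖f ω‖₊ ≤ s.sup fun i => ‖g i ω‖₊) (hc : 0 ≤ c) :
    tail lam f c ≤ ∑ i ∈ s, tail lam (g i) c := by
  refine (outer_mono lam fun ω hω => ?_).trans (outer_biUnion_finset_le lam s _)
  lift c to NNReal using hc
  obtain ⟨i, hi, hci⟩ := Finset.lt_sup_iff.1 (lt_of_lt_of_le (b := ‖f ω‖₊) hω (hfg ω))
  exact mem_biUnion hi hci

variable {lam}

theorem tendsto_tail_of_mem_L0 (hf : f ∈ L0 lam) : Tendsto (tail lam f) atTop (𝓝 0) := by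
  obtain ⟨s, hs, hsf⟩ := hf
  refine tendsto_order.2 ⟨fun ε hε => .of_forall fun c => hε.trans_le (tail_nonneg lam f c),
    fun ε hε => ?_⟩
  obtain ⟨N, hN⟩ := ((hsf 1 one_pos).eventually_lt_const hε).exists
  obtain ⟨M, hM⟩ := ((hs N).1.image abs).bddAbove
  filter_upwards [eventually_ge_atTop (M + 1)] with c hc
  refine (outer_mono lam fun ω (hω : c < |f ω|) => ?_).trans_lt hN
  have hsM : |s N ω| ≤ M := hM ⟨_, mem_range_self ω, rfl⟩
  have htri : |f ω| - |s N ω| ≤ |s N ω - f ω| := by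
    rw [abs_sub_comm]
    exact abs_sub_abs_le_abs_sub _ _
  exact (by linarith : 1 < |f ω| - |s N ω|).trans_le htri

theorem tendsto_tail_smul_of_mem_L0 (ha : a ≠ 0) (hf : f ∈ L0 lam) :
    Tendsto (tail lam (a • f)) atTop (𝓝 0) := by
  simp only [funext (tail_smul lam ha f)]
  exact (tendsto_tail_of_mem_L0 hf).comp (tendsto_id.atTop_div_const (abs_pos.2 ha))

theorem tendsto_tail_smul_of_lconv_zero {f : ℕ → Ω → ℝ} (ha : a ≠ 0) (hc : 0 < c)
    (hf : LConv lam f 0) : Tendsto (fun m => tail lam (a • f m) c) atTop (𝓝 0) := by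
  simp only [tail_smul lam ha]
  simpa only [tail, Pi.zero_apply, sub_zero] using hf (c / |a|) (div_pos hc (abs_pos.2 ha))

theorem BddL0.mono {K K' : Set (Ω → ℝ)} (hKK' : K ⊆ K') (hK' : BddL0 lam K') : BddL0 lam K :=
  fun ε hε => (hK' ε hε).imp fun _ hc₀ c hc f hf => hc₀ c hc f (hKK' hf)

theorem bddL0_of_summable_tail {ι : Type*} {g : ι → Ω → ℝ}
    (hg : ∀ i, Tendsto (tail lam (g i)) atTop (𝓝 0)) (hsum : Summable fun i => tail lam (g i) c) :
    BddL0 lam {h | ∃ s : Finset ι, ∀ ω, ‖h ω‖₊ ≤ s.sup fun i => ‖g i ω‖₊} := by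
  have hlim : Tendsto (fun d => ∑' i, tail lam (g i) d) atTop (𝓝 0) := by
    rw [← tsum_zero (β := ι)]
    refine tendsto_tsum_of_dominated_convergence hsum hg ?_
    filter_upwards [eventually_ge_atTop c] with d hcd i
    rw [Real.norm_of_nonneg (tail_nonneg lam _ _)]
    exact tail_antitone lam (g i) hcd
  intro ε hε
  have hevent : ∀ᶠ d in atTop, 0 ≤ d ∧ c ≤ d ∧ ∑' i, tail lam (g i) d < ε :=
    (eventually_ge_atTop 0).and ((eventually_ge_atTop c).and (hlim.eventually_lt_const hε))
  obtain ⟨d₀, hd₀⟩ := eventually_atTop.1 hevent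
  refine ⟨d₀, fun d hd h ⟨s, hs⟩ => ?_⟩
  obtain ⟨hd_nonneg, hcd, htsum⟩ := hd₀ d hd
  have hsum_d : Summable fun i => tail lam (g i) d :=
    hsum.of_nonneg_of_le (fun i => tail_nonneg lam _ _) fun i => tail_antitone lam (g i) hcd
  calc tail lam h d ≤ ∑ i ∈ s, tail lam (g i) d := tail_le_sum_tail lam hs hd_nonneg
    _ ≤ ∑' i, tail lam (g i) d := hsum_d.sum_le_tsum s fun i _ => tail_nonneg lam _ _
    _ < ε := htsum

end

/-- Lemma 27: every sequence in `L⁰(λ)` that `λ`-converges to `0` has a subsequence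
`(f_{n_k})` for which the set of subconvex combinations `Σ_k α_k 2^k |f_{n_k}|` is bounded
in `L⁰(λ)`. -/
theorem stmt_15 {Ω : Type*} {𝒜 : SetAlg Ω} (lam : BAMeasure 𝒜)
    (f : ℕ → Ω → ℝ) (hf : ∀ n, f n ∈ L0 lam) (hconv : LConv lam f 0) :
    ∃ n : ℕ → ℕ, StrictMono n ∧
      BddL0 lam {h : Ω → ℝ | ∃ (K : ℕ) (α : Fin K → ℝ),
        (∀ k, 0 ≤ α k) ∧ (∑ k, α k) ≤ 1 ∧
        h = fun ω => ∑ k : Fin K, α k * 2 ^ ((k : ℕ) + 1) * |f (n k) ω|} := by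
  have hpow (k : ℕ) : (2 : ℝ) ^ (k + 1) ≠ 0 := by positivity
  obtain ⟨n, hn, hsum⟩ := exists_strictMono_summable_diagonal fun k =>
    tendsto_tail_smul_of_lconv_zero (hpow k) one_pos hconv
  have hbdd := bddL0_of_summable_tail
    (fun k => tendsto_tail_smul_of_mem_L0 (hpow k) (hf (n k))) hsum
  refine ⟨n, hn, hbdd.mono ?_⟩
  rintro _ ⟨K, α, hα, hα_sum, rfl⟩
  refine ⟨(Finset.univ : Finset (Fin K)).map Fin.valEmbedding, fun ω => ?_⟩
  have hα_norm : ∑ k, ‖α k‖₊ ≤ 1 := by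
    rw [← NNReal.coe_le_coe]
    simpa [abs_of_nonneg (hα _)] using hα_sum
  rw [Finset.sup_map, Function.comp_def]
  simpa [mul_assoc] using nnnorm_sum_smul_le_sup hα_norm
    fun k : Fin K => (2 : ℝ) ^ ((k : ℕ) + 1) * |f (n k) ω|

end FA
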